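/- There do not exist functions φ, ψ : [ω]^ω → [ω]^ω (Borel or otherwise) satisfying: (a) for every centered family F ⊆ [ω]^ω, the image ψ(F) is linearly ordered by ⊆* (any two of its elements are ⊆*-comparable), and (b) for all x, y ∈ [ω]^ω, if x ⊆* ψ(y) then φ(x) ⊆* y. (I.e., there is no Tukey morphism from the pseudo-intersection number 𝔭 to the tower number 𝔱.) -/

import Mathlib

/-- `[ω]^ω`: the infinite subsets of ℕ. -/
abbrev InfSubset := {A : Set ℕ // A.Infinite}

/-- `A ⊆* B`: `A ∖ B` is finite. -/
def SubStar (A B : Set ℕ) : Prop := (A \ B).Finite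

/-- A family of infinite sets is centered iff every nonempty finite subfamily
has infinite intersection. -/
def Centered (F : Set InfSubset) : Prop :=
  ∀ s : Finset InfSubset, ↑s ⊆ F → s.Nonempty → (⋂ A ∈ s, A.1).Infinite

def rowSet (i : Fin 3) : InfSubset :=
  ⟨{n | n % 3 = i.1}, Set.infinite_of_injective_forall_mem (f := fun k : ℕ => 3 * k + i.1)
    (fun a b h => by simp only at h; omega) (fun k => by simp only [Set.mem_setOf_eq]; omega)⟩

def colSet (j : Fin 3) : InfSubset :=
  ⟨{n | n / 3 % 3 = j.1}, Set.infinite_of_injective_forall_mem (f := fun k : ℕ => 9 * k + 3 * j.1)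
    (fun a b h => by simp only at h; omega) (fun k => by simp only [Set.mem_setOf_eq]; omega)⟩

theorem centered_row_col (i j : Fin 3) : Centered {rowSet i, colSet j} := by
  intro s hs _
  refine Set.infinite_of_injective_forall_mem (f := fun k : ℕ => 9 * k + 3 * j.1 + i.1)
    (fun a b h => by simp only at h; omega) (fun k => ?_)
  simp only [Set.mem_iInter]
  intro A hA
  rcases hs hA with rfl | hA'
  · simp only [rowSet, Set.mem_setOf_eq]; omega
  · rw [Set.mem_singleton_iff.1 hA']
    simp only [colSet, Set.mem_setOf_eq]; omega

theorem not_both (z : InfSubset) {a b : Set ℕ} (h : ∀ n, n ∈ a → n ∉ b)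
    (ha : SubStar z.1 a) (hb : SubStar z.1 b) : False := by
  refine z.2 ((ha.union hb).subset ?_)
  intro n hn
  by_cases h1 : n ∈ a
  · exact Or.inr ⟨hn, h n h1⟩
  · exact Or.inl ⟨hn, h1⟩

theorem grid_three (f g : Fin 3 → Fin 3) : ∃ i j, j ≠ f i ∧ i ≠ g j := by
  by_contra! h
  have := h 0 0; have := h 0 1; have := h 0 2
  have := h 1 0; have := h 1 1; have := h 1 2
  have := h 2 0; have := h 2 1; have := h 2 2
  grind

theorem exists_index (P : Fin 3 → Prop) (h : ∀ a b, P a → P b → a = b) :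
    ∃ c, ∀ a, P a → a = c := by
  by_cases hP : ∃ c, P c
  · obtain ⟨c, hc⟩ := hP
    exact ⟨c, fun a ha => h a c ha hc⟩
  · exact ⟨0, fun a ha => (hP ⟨a, ha⟩).elim⟩

/-- There are no maps `φ, ψ : [ω]^ω → [ω]^ω` such that (a) the image under `ψ`
of every centered family is linearly ordered by `⊆*`, and (b) `x ⊆* ψ(y)`
implies `φ(x) ⊆* y`.  (No Tukey morphism from 𝔭 to 𝔱.) -/
theorem stmt5 :
    ¬ ∃ (φ ψ : InfSubset → InfSubset),
      (∀ F : Set InfSubset, Centered F →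
        ∀ x ∈ F, ∀ y ∈ F, SubStar (ψ x).1 (ψ y).1 ∨ SubStar (ψ y).1 (ψ x).1) ∧
      (∀ x y : InfSubset, SubStar x.1 (ψ y).1 → SubStar (φ x).1 y.1) := by
  rintro ⟨φ, ψ, ha, hb⟩
  have hf : ∀ i, ∃ c, ∀ j, SubStar (φ (ψ (rowSet i))).1 (colSet j).1 → j = c := by
    intro i
    refine exists_index _ fun a b h1 h2 => ?_
    by_contra hne
    refine not_both _ (fun n hn hn' => hne ?_) h1 h2
    simp only [colSet, Set.mem_setOf_eq] at hn hn'
    exact Fin.ext (hn.symm.trans hn')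
  have hg : ∀ j, ∃ c, ∀ i, SubStar (φ (ψ (colSet j))).1 (rowSet i).1 → i = c := by
    intro j
    refine exists_index _ fun a b h1 h2 => ?_
    by_contra hne
    refine not_both _ (fun n hn hn' => hne ?_) h1 h2
    simp only [rowSet, Set.mem_setOf_eq] at hn hn'
    exact Fin.ext (hn.symm.trans hn')
  choose f hf using hf
  choose g hg using hg
  obtain ⟨i, j, h1, h2⟩ := grid_three f g
  rcases ha _ (centered_row_col i j) (rowSet i) (by simp) (colSet j) (by simp) with h | h
  · exact h1 (hf i j (hb _ _ h))
  · exact h2 (hg j i (hb _ _ h))
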